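/- Assume u ∈ H²(Ω). Then there exists a constant C > 0 depending only on Ω, a, b and c such that for every N and every mesh equidistributing the adaptation function ρ computed from its own finite element solution u_h, the error satisfies ‖(u − u_h)'‖_Ω ≤ C ‖r‖_Ω / N, where r = f + a' u' − b u' − c u. -/

import Mathlib

/-!
Setting of Huang–He, "Error analysis for equidistributing meshes":
the boundary value problem  −(a u')' + b u' + c u = f on Ω = (0,1), u(0)=u(1)=0,
its linear finite element discretization on a mesh 0 = x₀ < ⋯ < x_N = 1,
and the residual-based equidistribution quantities.
-/

noncomputable section
open MeasureTheory Real

namespace EquidMesh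

/-- L² norm on (0,1). -/
def L2 (g : ℝ → ℝ) : ℝ := Real.sqrt (∫ t in (0:ℝ)..1, (g t)^2)

/-- L¹ norm on (0,1). -/
def L1 (g : ℝ → ℝ) : ℝ := ∫ t in (0:ℝ)..1, |g t|

/-- The L^{2/3} quasi-norm on (0,1): (∫₀¹ |g|^{2/3})^{3/2}. -/
def Lp23 (g : ℝ → ℝ) : ℝ := (∫ t in (0:ℝ)..1, |g t| ^ ((2:ℝ)/3)) ^ ((3:ℝ)/2)

/-- L^∞ norm (essential supremum of |g|) on (0,1). -/
def Linf (g : ℝ → ℝ) : ℝ := essSup (fun t => |g t|) (volume.restrict (Set.Ioo (0:ℝ) 1))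

/-- Membership in L²(0,1). -/
def MemL2 (g : ℝ → ℝ) : Prop :=
  Measurable g ∧ IntervalIntegrable (fun t => (g t)^2) volume 0 1

/-- Membership in L^∞(0,1). -/
def MemLinf (g : ℝ → ℝ) : Prop :=
  Measurable g ∧ ∃ M : ℝ, ∀ᵐ x ∂(volume.restrict (Set.Ioo (0:ℝ) 1)), |g x| ≤ M

/-- `g` is absolutely continuous on [0,1] with derivative `g' ∈ L¹(0,1)`. -/
def HasL1Deriv (g g' : ℝ → ℝ) : Prop :=
  Measurable g' ∧ IntervalIntegrable g' volume 0 1 ∧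
    ∀ x ∈ Set.Icc (0:ℝ) 1, g x = g 0 + ∫ t in (0:ℝ)..x, g' t

/-- A function in H¹(0,1): absolutely continuous on [0,1], carried together with its
(a.e.) derivative, which lies in L²(0,1). -/
structure H1 where
  val : ℝ → ℝ
  dval : ℝ → ℝ
  dval_meas : Measurable dval
  dval_int : IntervalIntegrable dval volume 0 1
  dval_sq_int : IntervalIntegrable (fun t => (dval t)^2) volume 0 1
  ftc : ∀ x ∈ Set.Icc (0:ℝ) 1, val x = val 0 + ∫ t in (0:ℝ)..x, dval t

/-- `u ∈ H²(0,1)`: the derivative `u'` is absolutely continuous with `u'' ∈ L²(0,1)`. -/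
def H1.IsH2 (u : H1) : Prop :=
  ∃ u'' : ℝ → ℝ, Measurable u'' ∧ IntervalIntegrable u'' volume 0 1 ∧
    IntervalIntegrable (fun t => (u'' t)^2) volume 0 1 ∧
    ∀ x ∈ Set.Icc (0:ℝ) 1, u.dval x = u.dval 0 + ∫ t in (0:ℝ)..x, u'' t

/-- The coefficients of the elliptic problem on Ω = (0,1):
`a, b ∈ W^{1,∞}(Ω)`, `c ∈ L^∞(Ω)`, `a ≥ a₀ > 0`, and `c − b'/2 ≥ 0` a.e. -/
structure Coeffs where
  a : ℝ → ℝ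
  b : ℝ → ℝ
  c : ℝ → ℝ
  a' : ℝ → ℝ
  b' : ℝ → ℝ
  a0 : ℝ
  a0_pos : 0 < a0
  a_lb : ∀ x ∈ Set.Icc (0:ℝ) 1, a0 ≤ a x
  a'_meas : Measurable a'
  b'_meas : Measurable b'
  c_meas : Measurable c
  a'_int : IntervalIntegrable a' volume 0 1
  b'_int : IntervalIntegrable b' volume 0 1
  a'_bdd : ∃ M : ℝ, ∀ᵐ x ∂(volume.restrict (Set.Ioo (0:ℝ) 1)), |a' x| ≤ M
  b'_bdd : ∃ M : ℝ, ∀ᵐ x ∂(volume.restrict (Set.Ioo (0:ℝ) 1)), |b' x| ≤ M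
  c_bdd : ∃ M : ℝ, ∀ᵐ x ∂(volume.restrict (Set.Ioo (0:ℝ) 1)), |c x| ≤ M
  ftc_a : ∀ x ∈ Set.Icc (0:ℝ) 1, a x = a 0 + ∫ t in (0:ℝ)..x, a' t
  ftc_b : ∀ x ∈ Set.Icc (0:ℝ) 1, b x = b 0 + ∫ t in (0:ℝ)..x, b' t
  cb_nonneg : ∀ᵐ x ∂(volume.restrict (Set.Ioo (0:ℝ) 1)), 0 ≤ c x - b' x / 2

/-- The bilinear form B(u,v) = ∫₀¹ (a u' v' + b u' v + c u v) dx. -/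
def Coeffs.B (P : Coeffs) (u v : H1) : ℝ :=
  ∫ t in (0:ℝ)..1,
    (P.a t * u.dval t * v.dval t + P.b t * u.dval t * v.val t + P.c t * u.val t * v.val t)

/-- The right-hand side functional (f, v) = ∫₀¹ f v dx. -/
def ip (f : ℝ → ℝ) (v : H1) : ℝ := ∫ t in (0:ℝ)..1, f t * v.val t

/-- `u ∈ H¹₀(Ω)` is the weak solution: B(u,v) = (f,v) for all v ∈ H¹₀(Ω). -/
def Coeffs.IsWeakSolution (P : Coeffs) (f : ℝ → ℝ) (u : H1) : Prop :=
  u.val 0 = 0 ∧ u.val 1 = 0 ∧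
    ∀ v : H1, v.val 0 = 0 → v.val 1 = 0 → P.B u v = ip f v

/-- A mesh of N elements of Ω = (0,1): 0 = x₀ < x₁ < ⋯ < x_N = 1. -/
structure Mesh (N : ℕ) where
  x : ℕ → ℝ
  x_zero : x 0 = 0
  x_last : x N = 1
  x_mono : ∀ i < N, x i < x (i+1)

/-- Element length (the element of index `i` is `(x i, x (i+1))`, `0 ≤ i < N`). -/
def Mesh.h {N : ℕ} (m : Mesh N) (i : ℕ) : ℝ := m.x (i+1) - m.x i

/-- `v` is piecewise linear with respect to the mesh: its derivative is constant
inside each element. -/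
def Mesh.IsPL {N : ℕ} (m : Mesh N) (v : H1) : Prop :=
  ∀ i < N, ∃ s : ℝ, ∀ t ∈ Set.Ioo (m.x i) (m.x (i+1)), v.dval t = s

/-- `uh` is the linear finite element solution on the mesh `m`:
a continuous piecewise linear function vanishing at 0 and 1 with
B(u_h, v_h) = (f, v_h) for all piecewise linear v_h vanishing at 0 and 1. -/
def Coeffs.IsFESolution (P : Coeffs) (f : ℝ → ℝ) {N : ℕ} (m : Mesh N) (uh : H1) : Prop :=
  uh.val 0 = 0 ∧ uh.val 1 = 0 ∧ m.IsPL uh ∧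
    ∀ v : H1, v.val 0 = 0 → v.val 1 = 0 → m.IsPL v → P.B uh v = ip f v

/-- The residual of `w`: r = f + a' w' − b w' − c w. -/
def Coeffs.res (P : Coeffs) (f : ℝ → ℝ) (w : H1) : ℝ → ℝ :=
  fun t => f t + P.a' t * w.dval t - P.b t * w.dval t - P.c t * w.val t

/-- The element L² average ⟨g⟩_i = (h_i⁻¹ ∫_{K_i} g²)^{1/2}. -/
def Mesh.avg {N : ℕ} (m : Mesh N) (g : ℝ → ℝ) (i : ℕ) : ℝ :=
  Real.sqrt ((1 / m.h i) * ∫ t in (m.x i)..(m.x (i+1)), (g t)^2)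

/-- The intensity parameter α_h = (Σ_i h_i ⟨g⟩_i^{2/3})³. -/
def Mesh.alpha {N : ℕ} (m : Mesh N) (g : ℝ → ℝ) : ℝ :=
  (∑ i ∈ Finset.range N, m.h i * (m.avg g i) ^ ((2:ℝ)/3)) ^ 3

/-- The adaptation function value ρ_i = (1 + α_h⁻¹ ⟨g⟩_i²)^{1/3}. -/
def Mesh.rho {N : ℕ} (m : Mesh N) (g : ℝ → ℝ) (i : ℕ) : ℝ :=
  (1 + (m.alpha g)⁻¹ * (m.avg g i)^2) ^ ((1:ℝ)/3)

/-- σ_h = Σ_i ρ_i h_i. -/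
def Mesh.sigma {N : ℕ} (m : Mesh N) (g : ℝ → ℝ) : ℝ :=
  ∑ i ∈ Finset.range N, m.rho g i * m.h i

/-- The mesh equidistributes (the piecewise constant adaptation function built from) `g`:
ρ_i h_i = σ_h / N for all elements. -/
def Mesh.IsEquidistributing {N : ℕ} (m : Mesh N) (g : ℝ → ℝ) : Prop :=
  ∀ i < N, m.rho g i * m.h i = m.sigma g / (N:ℝ)

/-- Membership in the mesh set S_N: 1/(ρ₀ N) ≤ h_i ≤ 2/N for all i. -/
def Mesh.InS {N : ℕ} (m : Mesh N) (ρ0 : ℝ) : Prop :=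
  ∀ i < N, 1 / (ρ0 * (N:ℝ)) ≤ m.h i ∧ m.h i ≤ 2 / (N:ℝ)

/-- The maximum norm distance ‖X − X̃‖_∞ between two meshes with the same N. -/
def meshDist {N : ℕ} (m m' : Mesh N) : ℝ :=
  (Finset.range (N+1)).sup' (Finset.nonempty_range_iff.mpr (Nat.succ_ne_zero N))
    (fun i => |m.x i - m'.x i|)

/-- The energy norm squared ‖v‖_E² = ∫₀¹ (a v'² + (c − b'/2) v²) dx. -/
def Coeffs.energySq (P : Coeffs) (v : H1) : ℝ :=
  ∫ t in (0:ℝ)..1, (P.a t * (v.dval t)^2 + (P.c t - P.b' t / 2) * (v.val t)^2)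

/-!
The form `B` is coercive with constant `a₀`, because the convection term contributes only
`-∫ b' v² / 2` to `B(v, v)`. For the error `e = u - u_h` and its interpolant `I e`, Galerkin
orthogonality gives `B(e, e) = B(e, e - I e) = ∫ r_h (e - I e)`: the interelement jumps of `a u_h'`
disappear since `e - I e` vanishes at the mesh points. Cauchy–Schwarz and Poincaré on each element
turn this into `a₀ ‖e'‖ ≤ η_h := (∑ᵢ hᵢ² ‖r_h‖²_{Kᵢ})^{1/2}`.

On an equidistributing mesh `ρᵢ hᵢ = σ_h / N` with `σ_h ≤ 2`, while
`hᵢ² ‖r_h‖²_{Kᵢ} = hᵢ³ ⟨r_h⟩ᵢ² ≤ α_h (ρᵢ hᵢ)³` and, by Jensen, `α_h ≤ ‖r_h‖²`. Summing,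
`η_h ≤ √8 ‖r_h‖ / N`.

The discrete residual `r_h` is traded for `r` by `‖r_h‖ ≤ ‖r‖ + κ ‖e'‖`, where the crude bound
`‖e'‖ ≤ K ‖u'‖ / a₀` suffices, and `‖u'‖ ≤ ‖r‖ / a₀` follows by testing the equation with `u / a`.
-/

open Set

open scoped ENNReal

local notation "vol[" s "," t "]" => volume.restrict (Ioc (s : ℝ) t)

section LpNorm

variable {α : Type*} [MeasurableSpace α] {μ : Measure α}

lemma lpNorm_mul_le {R : Type*} [NormedRing R] {p q r : ℝ≥0∞} [p.HolderTriple q r] {f g : α → R}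
    (hf : MemLp f p μ) (hg : MemLp g q μ) :
    lpNorm (f * g) r μ ≤ lpNorm f p μ * lpNorm g q μ := by
  rw [← toReal_eLpNorm (hf.1.mul hg.1), ← toReal_eLpNorm hf.1, ← toReal_eLpNorm hg.1,
    ← ENNReal.toReal_mul]
  exact ENNReal.toReal_mono (ENNReal.mul_ne_top hf.eLpNorm_ne_top hg.eLpNorm_ne_top)
    (eLpNorm_smul_le_mul_eLpNorm (f := g) (φ := f) hg.1 hf.1)

lemma norm_integral_mul_le_lpNorm_mul_lpNorm {R : Type*} [NormedRing R] [NormedSpace ℝ R]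
    {p q : ℝ≥0∞} [p.HolderTriple q 1] {f g : α → R} (hf : MemLp f p μ) (hg : MemLp g q μ) :
    ‖∫ x, f x * g x ∂μ‖ ≤ lpNorm f p μ * lpNorm g q μ :=
  calc ‖∫ x, f x * g x ∂μ‖
      ≤ ∫ x, ‖(f * g) x‖ ∂μ := norm_integral_le_integral_norm _
    _ = lpNorm (f * g) 1 μ := (lpNorm_one_eq_integral_norm (hf.1.mul hg.1)).symm
    _ ≤ lpNorm f p μ * lpNorm g q μ := lpNorm_mul_le hf hg

lemma integrable_mul_mul {R : Type*} [NormedRing R] {p q : ℝ≥0∞} [p.HolderTriple q 1]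
    {φ f g : α → R} (hφ : MemLp φ ∞ μ) (hf : MemLp f p μ) (hg : MemLp g q μ) :
    Integrable (fun x => φ x * f x * g x) μ :=
  memLp_one_iff_integrable.mp (hg.mul (hf.mul hφ : MemLp (φ * f) p μ))

lemma norm_integral_mul_mul_le {R : Type*} [NormedRing R] [NormedSpace ℝ R] {p q : ℝ≥0∞}
    [p.HolderTriple q 1] {φ f g : α → R} (hφ : MemLp φ ∞ μ) (hf : MemLp f p μ)
    (hg : MemLp g q μ) :
    ‖∫ x, φ x * f x * g x ∂μ‖ ≤ lpNorm φ ∞ μ * lpNorm f p μ * lpNorm g q μ :=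
  (norm_integral_mul_le_lpNorm_mul_lpNorm (hf.mul hφ : MemLp (φ * f) p μ) hg).trans
    (mul_le_mul_of_nonneg_right (lpNorm_mul_le hφ hf) lpNorm_nonneg)

lemma lpNorm_congr_ae {E : Type*} [NormedAddCommGroup E] {p : ℝ≥0∞} {f g : α → E}
    (hfg : f =ᵐ[μ] g) : lpNorm f p μ = lpNorm g p μ := by
  by_cases hf : AEStronglyMeasurable f μ
  · rw [← toReal_eLpNorm hf, ← toReal_eLpNorm (hf.congr hfg), eLpNorm_congr_ae hfg]
  · rw [lpNorm_of_not_aestronglyMeasurable hf,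
      lpNorm_of_not_aestronglyMeasurable (mt (·.congr hfg.symm) hf)]

lemma lpNorm_le_mul_lpNorm {E F : Type*} [NormedAddCommGroup E] [NormedAddCommGroup F]
    {p : ℝ≥0∞} {f : α → E} {g : α → F} {K : ℝ} (hK : 0 ≤ K) (hf : AEStronglyMeasurable f μ)
    (hg : MemLp g p μ) (h : ∀ᵐ x ∂μ, ‖f x‖ ≤ K * ‖g x‖) :
    lpNorm f p μ ≤ K * lpNorm g p μ := by
  rw [← toReal_eLpNorm hf, ← toReal_eLpNorm hg.1, ← ENNReal.toReal_ofReal hK, ← ENNReal.toReal_mul]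
  exact ENNReal.toReal_mono (ENNReal.mul_ne_top ENNReal.ofReal_ne_top hg.eLpNorm_ne_top)
    (eLpNorm_le_mul_eLpNorm_of_ae_le_mul h p)

lemma sq_lpNorm_two {f : α → ℝ} (hf : AEStronglyMeasurable f μ) :
    lpNorm f 2 μ ^ 2 = ∫ x, f x ^ 2 ∂μ := by
  rw [lpNorm_eq_integral_norm_rpow_toReal two_ne_zero ENNReal.ofNat_ne_top hf,
    ENNReal.toReal_ofNat, ← one_div, ← Real.sqrt_eq_rpow, Real.sq_sqrt (by positivity)]
  simp

lemma lpNorm_two_eq_sqrt {f : α → ℝ} (hf : AEStronglyMeasurable f μ) :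
    lpNorm f 2 μ = √(∫ x, f x ^ 2 ∂μ) := by
  rw [← sq_lpNorm_two hf, Real.sqrt_sq lpNorm_nonneg]

lemma lpNorm_sub_const_le [IsFiniteMeasure μ] {g : α → ℝ} {c : ℝ} (hg : MemLp g 2 μ)
    (hc : ∫ x, (g x - c) ∂μ = 0) : lpNorm (fun x => g x - c) 2 μ ≤ lpNorm g 2 μ := by
  have hgc : MemLp (fun x => g x - c) 2 μ := hg.sub (memLp_const c)
  have square : Integrable (fun x => (g x - c) ^ 2) μ := hgc.integrable_sq
  have cross : Integrable (fun x => 2 * c * (g x - c)) μ :=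
    (hgc.integrable one_le_two).const_mul _
  have pythagoras : ∫ x, g x ^ 2 ∂μ = ∫ x, (g x - c) ^ 2 ∂μ + ∫ _, c ^ 2 ∂μ :=
    calc ∫ x, g x ^ 2 ∂μ = ∫ x, ((g x - c) ^ 2 + c ^ 2 + 2 * c * (g x - c)) ∂μ := by
          congr with x; ring
      _ = ∫ x, (g x - c) ^ 2 ∂μ + ∫ _, c ^ 2 ∂μ + 2 * c * ∫ x, (g x - c) ∂μ := by
          rw [integral_add (by exact square.add (integrable_const _)) cross,
            integral_add square (integrable_const _), integral_const_mul]
      _ = _ := by rw [hc, mul_zero, add_zero]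
  refine le_of_sq_le_sq ?_ lpNorm_nonneg
  rw [sq_lpNorm_two hgc.1, sq_lpNorm_two hg.1, pythagoras]
  exact le_add_of_nonneg_right (integral_nonneg fun _ => sq_nonneg c)

lemma memLp_top_of_continuousOn {E : Type*} [NormedAddCommGroup E] {g : ℝ → E} {s t : ℝ}
    (hg : ContinuousOn g (Icc s t)) : MemLp g ∞ vol[s,t] := by
  obtain ⟨M, hM⟩ := isCompact_Icc.exists_bound_of_continuousOn hg
  exact memLp_top_of_bound
    ((hg.mono Ioc_subset_Icc_self).aestronglyMeasurable measurableSet_Ioc) M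
    ((ae_restrict_mem measurableSet_Ioc).mono fun x hx => hM x (Ioc_subset_Icc_self hx))

end LpNorm

lemma ae_mem_Ioo {s t : ℝ} : ∀ᵐ x ∂vol[s,t], x ∈ Ioo s t := by
  rw [← restrict_Ioo_eq_restrict_Ioc]
  exact ae_restrict_mem measurableSet_Ioo

lemma mul_le_of_mul_sq_le_mul {a x K : ℝ} (hx : 0 ≤ x) (hK : 0 ≤ K) (h : a * x ^ 2 ≤ K * x) :
    a * x ≤ K := by
  rcases hx.eq_or_lt with rfl | hx
  · simpa using hK
  · exact le_of_mul_le_mul_right (by linarith [h, sq x, mul_assoc a x x]) hx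

lemma absolutelyContinuousOnInterval_comp {X Y : Type*} [PseudoMetricSpace X]
    [PseudoMetricSpace Y] {φ : X → Y} {K : NNReal} {f : ℝ → X} {s t : ℝ}
    (hφ : LipschitzOnWith K φ (f '' uIcc s t)) (hf : AbsolutelyContinuousOnInterval f s t) :
    AbsolutelyContinuousOnInterval (φ ∘ f) s t := by
  unfold AbsolutelyContinuousOnInterval at hf
  refine squeeze_zero' (.of_forall fun _ => Finset.sum_nonneg fun _ _ => dist_nonneg) ?_
    (by simpa using hf.const_mul (K : ℝ))
  rw [Filter.eventually_inf_principal]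
  filter_upwards with E hE
  rw [Finset.mul_sum]
  exact Finset.sum_le_sum fun i hi =>
    hφ.dist_le_mul _ (mem_image_of_mem f (hE.1 i hi).1) _ (mem_image_of_mem f (hE.1 i hi).2)

/-- `f` is a primitive of `f'` in the sense of Lebesgue between `s` and `t`: it is absolutely
continuous there and `f'` is its derivative almost everywhere. The endpoints may come in either
order, as for interval integrals. -/
structure IsPrimitive (f f' : ℝ → ℝ) (s t : ℝ) : Prop where
  absolutelyContinuous : AbsolutelyContinuousOnInterval f s t
  ae_hasDerivAt : ∀ᵐ x, x ∈ uIoc s t → HasDerivAt f (f' x) x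

namespace IsPrimitive

variable {f f' g g' : ℝ → ℝ} {s t x y : ℝ}

lemma of_integral (hf' : IntervalIntegrable f' volume s t)
    (h : ∀ x ∈ uIcc s t, f x = f s + ∫ τ in s..x, f' τ) : IsPrimitive f f' s t := by
  set F : ℝ → ℝ := fun x => f s + ∫ τ in s..x, f' τ
  have endpoint : ∀ᵐ x : ℝ, x ≠ max s t := by simp [ae_iff]
  constructor
  · have hF : AbsolutelyContinuousOnInterval F s t :=
      (LipschitzWith.const (f s)).lipschitzOnWith.absolutelyContinuousOnInterval.fun_add
        (hf'.absolutelyContinuousOnInterval_intervalIntegral left_mem_uIcc)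
    refine hF.congr' ?_
    rw [Filter.EventuallyEq, Filter.eventually_inf_principal]
    filter_upwards with E hE
    exact Finset.sum_congr rfl fun i hi => by rw [h _ (hE.1 i hi).1, h _ (hE.1 i hi).2]
  · filter_upwards [hf'.ae_hasDerivAt_integral, endpoint] with x hderiv hx hmem
    have hnhds : uIcc s t ∈ nhds x := Icc_mem_nhds hmem.1 (hmem.2.lt_of_ne hx)
    exact ((hderiv (uIoc_subset_uIcc hmem) s left_mem_uIcc).const_add (f s)).congr_of_eventuallyEq
      (Filter.eventually_of_mem hnhds h)

lemma mono (hf : IsPrimitive f f' s t) (h : uIcc x y ⊆ uIcc s t) : IsPrimitive f f' x y :=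
  ⟨hf.1.mono h, hf.2.mono fun _ hτ hmem => hτ (uIoc_subset_uIoc_of_uIcc_subset_uIcc h hmem)⟩

lemma mul (hf : IsPrimitive f f' s t) (hg : IsPrimitive g g' s t) :
    IsPrimitive (fun x => f x * g x) (fun x => f' x * g x + f x * g' x) s t :=
  ⟨hf.1.fun_mul hg.1, hf.2.mp (hg.2.mono fun _ hgx hfx hx => (hfx hx).mul (hgx hx))⟩

lemma inv {ε : ℝ} (hε : 0 < ε) (hfε : ∀ x ∈ uIcc s t, ε ≤ f x) (hf : IsPrimitive f f' s t) :
    IsPrimitive (fun x => (f x)⁻¹) (fun x => -f' x / f x ^ 2) s t := by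
  have lipschitz : LipschitzOnWith (Real.toNNReal (ε⁻¹ * ε⁻¹)) (·⁻¹) (f '' uIcc s t) := by
    refine LipschitzOnWith.of_dist_le_mul ?_
    rintro _ ⟨x, hx, rfl⟩ _ ⟨y, hy, rfl⟩
    have hfx := hε.trans_le (hfε x hx)
    have hfy := hε.trans_le (hfε y hy)
    rw [dist_inv_inv₀ hfx.ne' hfy.ne', Real.coe_toNNReal _ (by positivity), Real.norm_of_nonneg
      hfx.le, Real.norm_of_nonneg hfy.le, div_eq_inv_mul, mul_inv]
    gcongr
    exacts [hfε x hx, hfε y hy]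
  refine ⟨absolutelyContinuousOnInterval_comp lipschitz hf.1, hf.2.mono fun x hderiv hx => ?_⟩
  exact (hderiv hx).fun_inv (hε.trans_le (hfε x (uIoc_subset_uIcc hx))).ne'

lemma deriv_ae_eq (hf : IsPrimitive f f' s t) : ∀ᵐ x, x ∈ uIoc s t → deriv f x = f' x :=
  hf.2.mono fun _ hx hmem => (hx hmem).deriv

lemma intervalIntegrable (hf : IsPrimitive f f' s t) : IntervalIntegrable f' volume s t :=
  hf.1.intervalIntegrable_deriv.congr_ae
    ((ae_restrict_iff' measurableSet_uIoc).mpr hf.deriv_ae_eq)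

lemma integral_eq_sub (hf : IsPrimitive f f' s t) : ∫ x in s..t, f' x = f t - f s := by
  rw [← hf.1.integral_deriv_eq_sub]
  exact (intervalIntegral.integral_congr_ae hf.deriv_ae_eq).symm

lemma continuousOn (hf : IsPrimitive f f' s t) : ContinuousOn f (uIcc s t) :=
  hf.1.continuousOn

lemma memLp_top (hf : IsPrimitive f f' s t) (hst : s ≤ t) : MemLp f ∞ vol[s,t] :=
  memLp_top_of_continuousOn (uIcc_of_le hst ▸ hf.continuousOn)

end IsPrimitive

lemma IsPrimitive.norm_le_lpNorm_one {f f' : ℝ → ℝ} {s t x : ℝ} (hf : IsPrimitive f f' s t)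
    (hfs : f s = 0) (hx : x ∈ Ioc s t) : ‖f x‖ ≤ lpNorm f' 1 vol[s,t] := by
  have hint : IntegrableOn f' (Ioc s t) :=
    (intervalIntegrable_iff_integrableOn_Ioc_of_le (hx.1.le.trans hx.2)).mp hf.intervalIntegrable
  have hsub : uIcc s x ⊆ uIcc s t :=
    uIcc_subset_uIcc_left (Ioc_subset_Icc_self.trans Icc_subset_uIcc hx)
  rw [← sub_zero (f x), ← hfs, ← (hf.mono hsub).integral_eq_sub,
    lpNorm_one_eq_integral_norm hint.1, intervalIntegral.integral_of_le hx.1.le]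
  exact (norm_integral_le_integral_norm _).trans <| setIntegral_mono_set hint.norm
    (.of_forall fun _ => norm_nonneg _) (Ioc_subset_Ioc_right hx.2).eventuallyLE

lemma IsPrimitive.lpNorm_le_sub_mul_lpNorm {f f' : ℝ → ℝ} {s t : ℝ} {p : ℝ≥0∞}
    (hf : IsPrimitive f f' s t) (hst : s ≤ t) (hfs : f s = 0) (hp : 1 ≤ p)
    (hf' : MemLp f' p vol[s,t]) :
    lpNorm f p vol[s,t] ≤ (t - s) * lpNorm f' p vol[s,t] := by
  set μ : Measure ℝ := vol[s,t]
  have hμ : μ univ = ENNReal.ofReal (t - s) := by simp [μ]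
  have hf'1 : MemLp f' 1 μ := hf'.mono_exponent hp
  have pointwise : ∀ᵐ x ∂μ, ‖f x‖ ≤ lpNorm f' 1 μ :=
    (ae_restrict_mem measurableSet_Ioc).mono fun x hx => hf.norm_le_lpNorm_one hfs hx
  have exponents : μ univ ^ p.toReal⁻¹ * μ univ ^ (1 / (1 : ℝ≥0∞).toReal - 1 / p.toReal)
      = ENNReal.ofReal (t - s) := by
    have hinv : p.toReal⁻¹ ≤ 1 := by
      rw [← ENNReal.toReal_inv]
      exact ENNReal.toReal_le_of_le_ofReal zero_le_one (by simpa using hp)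
    rw [ENNReal.toReal_one, div_one, one_div, ← ENNReal.rpow_add_of_nonneg _ _ (by positivity)
      (sub_nonneg.mpr hinv), add_sub_cancel, ENNReal.rpow_one, hμ]
  rw [← toReal_eLpNorm ((hf.memLp_top hst).1), ← toReal_eLpNorm hf'.1,
    ← ENNReal.toReal_ofReal (sub_nonneg.mpr hst), ← ENNReal.toReal_mul]
  refine ENNReal.toReal_mono (ENNReal.mul_ne_top ENNReal.ofReal_ne_top hf'.eLpNorm_ne_top) ?_
  calc eLpNorm f p μ ≤ μ univ ^ p.toReal⁻¹ * ENNReal.ofReal (lpNorm f' 1 μ) :=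
        eLpNorm_le_of_ae_bound pointwise
    _ = μ univ ^ p.toReal⁻¹ * eLpNorm f' 1 μ := by rw [ofReal_lpNorm hf'1]
    _ ≤ μ univ ^ p.toReal⁻¹ *
          (eLpNorm f' p μ * μ univ ^ (1 / (1 : ℝ≥0∞).toReal - 1 / p.toReal)) := by
        gcongr
        exact eLpNorm_le_eLpNorm_mul_rpow_measure_univ hp hf'.1
    _ = ENNReal.ofReal (t - s) * eLpNorm f' p μ := by
        rw [← exponents]; ring

lemma MemL2.memLp {g : ℝ → ℝ} (hg : MemL2 g) : MemLp g 2 vol[0,1] :=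
  (memLp_two_iff_integrable_sq hg.1.aestronglyMeasurable).mpr
    ((intervalIntegrable_iff_integrableOn_Ioc_of_le zero_le_one).mp hg.2)

lemma MemLinf.memLp {g : ℝ → ℝ} (hg : MemLinf g) : MemLp g ∞ vol[0,1] := by
  obtain ⟨hmeas, M, hM⟩ := hg
  rw [restrict_Ioo_eq_restrict_Ioc] at hM
  exact memLp_top_of_bound hmeas.aestronglyMeasurable M hM

lemma L2_eq_lpNorm {g : ℝ → ℝ} (hg : AEStronglyMeasurable g vol[0,1]) :
    L2 g = lpNorm g 2 vol[0,1] := by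
  rw [lpNorm_two_eq_sqrt hg, L2, intervalIntegral.integral_of_le zero_le_one]

namespace H1

instance : Sub H1 where
  sub v w :=
    { val := fun t => v.val t - w.val t
      dval := fun t => v.dval t - w.dval t
      dval_meas := v.dval_meas.sub w.dval_meas
      dval_int := v.dval_int.sub w.dval_int
      dval_sq_int := by
        have hv : MemL2 v.dval := ⟨v.dval_meas, v.dval_sq_int⟩
        have hw : MemL2 w.dval := ⟨w.dval_meas, w.dval_sq_int⟩
        exact (intervalIntegrable_iff_integrableOn_Ioc_of_le zero_le_one).mpr
          (hv.memLp.sub hw.memLp).integrable_sq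
      ftc := fun x hx => by
        have hsub : uIcc 0 x ⊆ uIcc 0 1 := uIcc_subset_uIcc_left (Icc_subset_uIcc hx)
        rw [v.ftc x hx, w.ftc x hx, intervalIntegral.integral_sub (v.dval_int.mono_set hsub)
          (w.dval_int.mono_set hsub)]
        ring }

@[simp] lemma sub_val (v w : H1) (t : ℝ) : (v - w).val t = v.val t - w.val t := rfl

@[simp] lemma sub_dval (v w : H1) (t : ℝ) : (v - w).dval t = v.dval t - w.dval t := rfl

/-- Membership in `H¹₀(0,1)`, the subspace of `H¹(0,1)` of functions with zero boundary values. -/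
structure IsH10 (v : H1) : Prop where
  val_zero : v.val 0 = 0
  val_one : v.val 1 = 0

variable {v w : H1}

lemma IsH10.sub (hv : v.IsH10) (hw : w.IsH10) : (v - w).IsH10 :=
  ⟨by simp [hv.val_zero, hw.val_zero], by simp [hv.val_one, hw.val_one]⟩

variable (v)

lemma isPrimitive : IsPrimitive v.val v.dval 0 1 :=
  .of_integral v.dval_int fun x hx => v.ftc x (uIcc_of_le (zero_le_one' ℝ) ▸ hx)

lemma memLp_dval : MemLp v.dval 2 vol[0,1] :=
  MemL2.memLp ⟨v.dval_meas, v.dval_sq_int⟩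

lemma memLp_top_val : MemLp v.val ∞ vol[0,1] :=
  v.isPrimitive.memLp_top zero_le_one

lemma memLp_val : MemLp v.val 2 vol[0,1] :=
  v.memLp_top_val.mono_exponent le_top

variable {v}

lemma lpNorm_val_le (hv : v.val 0 = 0) :
    lpNorm v.val 2 vol[0,1] ≤ lpNorm v.dval 2 vol[0,1] := by
  simpa using v.isPrimitive.lpNorm_le_sub_mul_lpNorm zero_le_one hv one_le_two v.memLp_dval

lemma exists_of_isPrimitive {g g' : ℝ → ℝ} (hg : IsPrimitive g g' 0 1)
    (hg' : MemLp g' 2 vol[0,1]) : ∃ w : H1, w.val = g ∧ w.dval =ᵐ[vol[0,1]] g' := by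
  have hmk : g' =ᵐ[vol[0,1]] hg'.1.mk := hg'.1.ae_eq_mk
  have hmk2 : MemLp hg'.1.mk 2 vol[0,1] := hg'.ae_eq hmk
  refine ⟨⟨g, hg'.1.mk, hg'.1.stronglyMeasurable_mk.measurable, ?_, ?_, fun x hx => ?_⟩, rfl,
    hmk.symm⟩
  · exact (intervalIntegrable_iff_integrableOn_Ioc_of_le zero_le_one).mpr
      (hmk2.integrable one_le_two)
  · exact (intervalIntegrable_iff_integrableOn_Ioc_of_le zero_le_one).mpr hmk2.integrable_sq
  · have hsub : uIcc 0 x ⊆ uIcc 0 1 := uIcc_subset_uIcc_left (Icc_subset_uIcc hx)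
    rw [← sub_eq_iff_eq_add', ← (hg.mono hsub).integral_eq_sub,
      intervalIntegral.integral_of_le hx.1, intervalIntegral.integral_of_le hx.1]
    exact integral_congr_ae (ae_restrict_of_ae_restrict_of_subset (Ioc_subset_Ioc_right hx.2) hmk)

/-- The function in `H¹(0,1)` with derivative `g ∈ L²(0,1)` and value `c` at `0`. -/
def ofDeriv (c : ℝ) (g : ℝ → ℝ) (hg : MemL2 g) : H1 where
  val x := c + ∫ t in (0 : ℝ)..x, g t
  dval := g
  dval_meas := hg.1
  dval_int := (intervalIntegrable_iff_integrableOn_Ioc_of_le zero_le_one).mpr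
    (hg.memLp.integrable one_le_two)
  dval_sq_int := hg.2
  ftc x _ := by simp

end H1

namespace Coeffs

variable (P : Coeffs)

lemma isPrimitive_a : IsPrimitive P.a P.a' 0 1 :=
  .of_integral P.a'_int fun x hx => P.ftc_a x (uIcc_of_le (zero_le_one' ℝ) ▸ hx)

lemma isPrimitive_b : IsPrimitive P.b P.b' 0 1 :=
  .of_integral P.b'_int fun x hx => P.ftc_b x (uIcc_of_le (zero_le_one' ℝ) ▸ hx)

lemma memLp_a : MemLp P.a ∞ vol[0,1] :=
  P.isPrimitive_a.memLp_top zero_le_one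

lemma memLp_b : MemLp P.b ∞ vol[0,1] :=
  P.isPrimitive_b.memLp_top zero_le_one

lemma memLp_c : MemLp P.c ∞ vol[0,1] :=
  MemLinf.memLp ⟨P.c_meas, P.c_bdd⟩

lemma memLp_a' : MemLp P.a' ∞ vol[0,1] :=
  MemLinf.memLp ⟨P.a'_meas, P.a'_bdd⟩

lemma memLp_b' : MemLp P.b' ∞ vol[0,1] :=
  MemLinf.memLp ⟨P.b'_meas, P.b'_bdd⟩

section BilinearForm

variable (v w : H1)

lemma intervalIntegrable_B : IntervalIntegrable (fun t =>
    P.a t * v.dval t * w.dval t + P.b t * v.dval t * w.val t + P.c t * v.val t * w.val t)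
    volume 0 1 :=
  (intervalIntegrable_iff_integrableOn_Ioc_of_le zero_le_one).mpr <|
    ((integrable_mul_mul P.memLp_a v.memLp_dval w.memLp_dval).add
      (integrable_mul_mul P.memLp_b v.memLp_dval w.memLp_val)).add
      (integrable_mul_mul P.memLp_c v.memLp_val w.memLp_val)

lemma B_eq_add : P.B v w = (∫ t, P.a t * v.dval t * w.dval t ∂vol[0,1]) +
    (∫ t, P.b t * v.dval t * w.val t ∂vol[0,1]) + ∫ t, P.c t * v.val t * w.val t ∂vol[0,1] := by
  have ha := integrable_mul_mul P.memLp_a v.memLp_dval w.memLp_dval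
  have hb := integrable_mul_mul P.memLp_b v.memLp_dval w.memLp_val
  have hc := integrable_mul_mul P.memLp_c v.memLp_val w.memLp_val
  rw [B, intervalIntegral.integral_of_le zero_le_one, integral_add (by exact ha.add hb) hc,
    integral_add ha hb]

lemma B_sub_left (v₁ v₂ w : H1) : P.B (v₁ - v₂) w = P.B v₁ w - P.B v₂ w := by
  simp only [B, ← intervalIntegral.integral_sub (P.intervalIntegrable_B v₁ w)
    (P.intervalIntegrable_B v₂ w), H1.sub_val, H1.sub_dval]
  congr with t
  ring

lemma B_sub_right (v w₁ w₂ : H1) : P.B v (w₁ - w₂) = P.B v w₁ - P.B v w₂ := by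
  simp only [B, ← intervalIntegral.integral_sub (P.intervalIntegrable_B v w₁)
    (P.intervalIntegrable_B v w₂), H1.sub_val, H1.sub_dval]
  congr with t
  ring

/-- A bound for the bilinear form `B` on `H¹₀(0,1)` with the norm `‖v'‖`. -/
def continuityConst : ℝ :=
  lpNorm P.a ∞ vol[0,1] + lpNorm P.b ∞ vol[0,1] + lpNorm P.c ∞ vol[0,1]

lemma continuityConst_nonneg : 0 ≤ P.continuityConst :=
  add_nonneg (add_nonneg lpNorm_nonneg lpNorm_nonneg) lpNorm_nonneg

variable {v w}

lemma B_le (hv : v.val 0 = 0) (hw : w.val 0 = 0) :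
    P.B v w ≤ P.continuityConst * lpNorm v.dval 2 vol[0,1] * lpNorm w.dval 2 vol[0,1] := by
  have ha := norm_integral_mul_mul_le P.memLp_a v.memLp_dval w.memLp_dval
  have hb := norm_integral_mul_mul_le P.memLp_b v.memLp_dval w.memLp_val
  have hc := norm_integral_mul_mul_le P.memLp_c v.memLp_val w.memLp_val
  have hvv := H1.lpNorm_val_le hv
  have hww := H1.lpNorm_val_le hw
  rw [B_eq_add, continuityConst, add_mul, add_mul, add_mul, add_mul]
  refine add_le_add (add_le_add (le_of_abs_le ha) ((le_of_abs_le hb).trans ?_))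
    ((le_of_abs_le hc).trans ?_)
  · exact mul_le_mul_of_nonneg_left hww (mul_nonneg lpNorm_nonneg lpNorm_nonneg)
  · exact mul_le_mul (mul_le_mul_of_nonneg_left hvv lpNorm_nonneg) hww lpNorm_nonneg
      (mul_nonneg lpNorm_nonneg lpNorm_nonneg)

lemma B_self_eq_energySq (hv : v.IsH10) : P.B v v = P.energySq v := by
  have primitive := P.isPrimitive_b.mul (v.isPrimitive.mul v.isPrimitive)
  have boundary := primitive.integral_eq_sub
  rw [hv.val_zero, hv.val_one, mul_zero, mul_zero, mul_zero, sub_zero] at boundary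
  rw [← sub_zero (P.B v v), ← zero_div 2, ← boundary, B, energySq,
    ← intervalIntegral.integral_div, ← intervalIntegral.integral_sub (P.intervalIntegrable_B v v)
    (primitive.intervalIntegrable.div_const 2)]
  congr with t
  ring

lemma a0_mul_sq_le_energySq (v : H1) :
    P.a0 * lpNorm v.dval 2 vol[0,1] ^ 2 ≤ P.energySq v := by
  have hc := P.cb_nonneg
  rw [restrict_Ioo_eq_restrict_Ioc] at hc
  have hcb : MemLp (fun t => P.c t - P.b' t / 2) ∞ vol[0,1] := by
    simpa only [div_eq_inv_mul] using! P.memLp_c.sub (P.memLp_b'.const_mul 2⁻¹)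
  have energyIntegrable : Integrable (fun t => P.a t * v.dval t ^ 2 +
      (P.c t - P.b' t / 2) * v.val t ^ 2) vol[0,1] := by
    simpa only [sq, ← mul_assoc] using!
      (integrable_mul_mul P.memLp_a v.memLp_dval v.memLp_dval).add
        (integrable_mul_mul hcb v.memLp_val v.memLp_val)
  rw [sq_lpNorm_two v.memLp_dval.1, ← integral_const_mul, energySq,
    intervalIntegral.integral_of_le zero_le_one]
  refine integral_mono_ae (v.memLp_dval.integrable_sq.const_mul _) energyIntegrable ?_
  filter_upwards [hc, ae_restrict_mem measurableSet_Ioc] with t hct ht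
  have hat := P.a_lb t (Ioc_subset_Icc_self ht)
  have := mul_le_mul_of_nonneg_right hat (sq_nonneg (v.dval t))
  have := mul_nonneg hct (sq_nonneg (v.val t))
  linarith

lemma coercive (hv : v.IsH10) : P.a0 * lpNorm v.dval 2 vol[0,1] ^ 2 ≤ P.B v v :=
  P.B_self_eq_energySq hv ▸ P.a0_mul_sq_le_energySq v

lemma a0_mul_lpNorm_le {K : ℝ} (hv : v.IsH10) (hK : 0 ≤ K)
    (h : P.B v v ≤ K * lpNorm v.dval 2 vol[0,1]) : P.a0 * lpNorm v.dval 2 vol[0,1] ≤ K :=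
  mul_le_of_mul_sq_le_mul lpNorm_nonneg hK ((P.coercive hv).trans h)

end BilinearForm

variable {f : ℝ → ℝ}

section Residual

lemma memLp_res (hf : MemL2 f) (v : H1) : MemLp (P.res f v) 2 vol[0,1] :=
  ((hf.memLp.add (v.memLp_dval.mul P.memLp_a')).sub (v.memLp_dval.mul P.memLp_b)).sub
    (v.memLp_val.mul P.memLp_c)

/-- A Lipschitz constant of the residual map `v ↦ f + a' v' - b v' - c v` from `H¹₀(0,1)`, with the
norm `‖v'‖`, to `L²(0,1)`. -/
def residualConst : ℝ :=
  lpNorm P.a' ∞ vol[0,1] + lpNorm P.b ∞ vol[0,1] + lpNorm P.c ∞ vol[0,1]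

lemma residualConst_nonneg : 0 ≤ P.residualConst :=
  add_nonneg (add_nonneg lpNorm_nonneg lpNorm_nonneg) lpNorm_nonneg

lemma lpNorm_res_le {v w : H1} (hf : MemL2 f) (hvw : (v - w).val 0 = 0) :
    lpNorm (P.res f w) 2 vol[0,1] ≤
      lpNorm (P.res f v) 2 vol[0,1] + P.residualConst * lpNorm (v - w).dval 2 vol[0,1] := by
  have ha := (v - w).memLp_dval.mul (r := 2) P.memLp_a'
  have hb := (v - w).memLp_dval.mul (r := 2) P.memLp_b
  have hval := H1.lpNorm_val_le hvw
  have res_eq : P.res f w = P.res f v -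
      (P.a' * (v - w).dval - P.b * (v - w).dval - P.c * (v - w).val) := by
    ext t
    simp only [res, Pi.sub_apply, Pi.mul_apply, H1.sub_val, H1.sub_dval]
    ring
  calc lpNorm (P.res f w) 2 vol[0,1]
      ≤ lpNorm (P.res f v) 2 vol[0,1] + (lpNorm (P.a' * (v - w).dval) 2 vol[0,1] +
          lpNorm (P.b * (v - w).dval) 2 vol[0,1] + lpNorm (P.c * (v - w).val) 2 vol[0,1]) := by
        rw [res_eq]
        exact (lpNorm_sub_le (P.memLp_res hf v) one_le_two).trans <| add_le_add_right
          ((lpNorm_sub_le (ha.sub hb) one_le_two).trans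
            (add_le_add_left (lpNorm_sub_le ha one_le_two) _)) _
    _ ≤ lpNorm (P.res f v) 2 vol[0,1] + P.residualConst * lpNorm (v - w).dval 2 vol[0,1] := by
        rw [residualConst, add_mul, add_mul]
        refine add_le_add_right (add_le_add (add_le_add
          (lpNorm_mul_le P.memLp_a' (v - w).memLp_dval)
          (lpNorm_mul_le P.memLp_b (v - w).memLp_dval))
          ((lpNorm_mul_le P.memLp_c (v - w).memLp_val).trans ?_)) _
        exact mul_le_mul_of_nonneg_left hval lpNorm_nonneg

lemma integral_res_mul (hf : MemL2 f) (v w : H1) :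
    ∫ t in (0 : ℝ)..1, P.res f v t * w.val t = ip f w - P.B v w +
      ∫ t in (0 : ℝ)..1, v.dval t * (P.a' t * w.val t + P.a t * w.dval t) := by
  have hfw : IntervalIntegrable (fun t => f t * w.val t) volume 0 1 :=
    (intervalIntegrable_iff_integrableOn_Ioc_of_le zero_le_one).mpr
      (hf.memLp.integrable_mul w.memLp_val)
  have hflux : IntervalIntegrable
      (fun t => v.dval t * (P.a' t * w.val t + P.a t * w.dval t)) volume 0 1 :=
    (intervalIntegrable_iff_integrableOn_Ioc_of_le zero_le_one).mpr <|
      v.memLp_dval.integrable_mul <|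
        (w.memLp_val.mul (r := 2) P.memLp_a').add (w.memLp_dval.mul P.memLp_a)
  rw [ip, B, ← intervalIntegral.integral_sub hfw (P.intervalIntegrable_B v w),
    ← intervalIntegral.integral_add (hfw.sub (P.intervalIntegrable_B v w)) hflux]
  congr with t
  rw [res]
  ring

end Residual

lemma exists_div_a {v : H1} (hv : v.IsH10) : ∃ w : H1, w.IsH10 ∧ (∀ t, w.val t = v.val t / P.a t) ∧
    ∀ᵐ t ∂vol[0,1], P.a' t * w.val t + P.a t * w.dval t = v.dval t := by
  have ha_pos : ∀ t ∈ Icc (0 : ℝ) 1, 0 < P.a t := fun t ht => P.a0_pos.trans_le (P.a_lb t ht)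
  have primitive_inv := P.isPrimitive_a.inv P.a0_pos (uIcc_of_le (zero_le_one' ℝ) ▸ P.a_lb)
  have inv_top := primitive_inv.memLp_top zero_le_one
  have deriv_inv_top : MemLp (fun t => -P.a' t / P.a t ^ 2) ∞ vol[0,1] := by
    simpa only [div_eq_mul_inv, sq, mul_inv] using!
      (inv_top.mul (r := ∞) inv_top).mul (r := ∞) P.memLp_a'.neg
  obtain ⟨w, hval, hdval⟩ := H1.exists_of_isPrimitive (v.isPrimitive.mul primitive_inv)
    ((inv_top.mul (r := 2) v.memLp_dval).add (deriv_inv_top.mul v.memLp_val))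
  refine ⟨w, ⟨by simp [hval, hv.val_zero], by simp [hval, hv.val_one]⟩,
    fun t => by rw [hval, div_eq_mul_inv], ?_⟩
  filter_upwards [hdval, ae_restrict_mem measurableSet_Ioc] with t ht hmem
  have := (ha_pos t (Ioc_subset_Icc_self hmem)).ne'
  rw [ht, hval]
  field_simp
  ring

namespace IsWeakSolution

variable {P} {u : H1}

lemma isH10 (hu : P.IsWeakSolution f u) : u.IsH10 := ⟨hu.1, hu.2.1⟩

/-- For smooth data `-a u'' = res f u`, and testing with `u / a` instead of `u` removes `a` from
the left-hand side. -/
lemma a0_mul_lpNorm_dval_le (hf : MemL2 f) (hu : P.IsWeakSolution f u) :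
    P.a0 * lpNorm u.dval 2 vol[0,1] ≤ lpNorm (P.res f u) 2 vol[0,1] := by
  obtain ⟨w, hw, hval, hflux⟩ := P.exists_div_a hu.isH10
  have tested : lpNorm u.dval 2 vol[0,1] ^ 2 = ∫ t, P.res f u t * w.val t ∂vol[0,1] := by
    rw [← intervalIntegral.integral_of_le zero_le_one, P.integral_res_mul hf,
      hu.2.2 w hw.1 hw.2, sub_self, zero_add, intervalIntegral.integral_of_le zero_le_one,
      sq_lpNorm_two u.memLp_dval.1]
    exact integral_congr_ae (hflux.mono fun t ht => by simp only [ht, sq])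
  have hw_le : P.a0 * lpNorm w.val 2 vol[0,1] ≤ lpNorm u.dval 2 vol[0,1] := by
    refine ((le_inv_mul_iff₀ P.a0_pos).mp ?_).trans (H1.lpNorm_val_le hu.1)
    refine lpNorm_le_mul_lpNorm (inv_nonneg.mpr P.a0_pos.le) w.memLp_val.1 u.memLp_val ?_
    filter_upwards [ae_restrict_mem measurableSet_Ioc] with t ht
    have hat := P.a_lb t (Ioc_subset_Icc_self ht)
    rw [hval, norm_div, Real.norm_of_nonneg (P.a0_pos.le.trans hat), div_eq_inv_mul]
    exact mul_le_mul_of_nonneg_right (inv_anti₀ P.a0_pos hat) (norm_nonneg _)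
  refine mul_le_of_mul_sq_le_mul lpNorm_nonneg lpNorm_nonneg ?_
  calc P.a0 * lpNorm u.dval 2 vol[0,1] ^ 2
      ≤ P.a0 * (lpNorm (P.res f u) 2 vol[0,1] * lpNorm w.val 2 vol[0,1]) := by
        rw [tested]
        exact mul_le_mul_of_nonneg_left (le_of_abs_le
          (norm_integral_mul_le_lpNorm_mul_lpNorm (P.memLp_res hf u) w.memLp_val)) P.a0_pos.le
    _ = lpNorm (P.res f u) 2 vol[0,1] * (P.a0 * lpNorm w.val 2 vol[0,1]) := mul_left_comm ..
    _ ≤ lpNorm (P.res f u) 2 vol[0,1] * lpNorm u.dval 2 vol[0,1] :=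
        mul_le_mul_of_nonneg_left hw_le lpNorm_nonneg

end IsWeakSolution

end Coeffs

namespace Mesh

variable {N : ℕ} (m : Mesh N) {i j : ℕ}

section Geometry

lemma x_le_x (hij : i ≤ j) (hj : j ≤ N) : m.x i ≤ m.x j := by
  induction j, hij using Nat.le_induction with
  | base => rfl
  | succ k _ ih => exact (ih (Nat.le_of_succ_le hj)).trans (m.x_mono k hj).le

lemma h_pos (hi : i < N) : 0 < m.h i :=
  sub_pos.mpr (m.x_mono i hi)

lemma sum_h : ∑ i ∈ Finset.range N, m.h i = 1 := by
  simp only [h, Finset.sum_range_sub, m.x_zero, m.x_last, sub_zero]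

lemma Ioc_subset (hi : i < N) : Ioc (m.x i) (m.x (i + 1)) ⊆ Ioc 0 1 :=
  Ioc_subset_Ioc (m.x_zero ▸ m.x_le_x i.zero_le hi.le) (m.x_last ▸ m.x_le_x hi le_rfl)

lemma x_mem (hj : j ≤ N) : m.x j ∈ uIcc (0 : ℝ) 1 :=
  Icc_subset_uIcc
    ⟨m.x_zero ▸ m.x_le_x j.zero_le hj, m.x_last ▸ m.x_le_x hj le_rfl⟩

lemma uIcc_subset (hi : i < N) : uIcc (m.x i) (m.x (i + 1)) ⊆ uIcc 0 1 :=
  uIcc_subset_uIcc (m.x_mem hi.le) (m.x_mem hi)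

lemma restrict_le (hi : i < N) : vol[m.x i,m.x (i + 1)] ≤ vol[0,1] :=
  Measure.restrict_mono (m.Ioc_subset hi) le_rfl

lemma sum_integral {E : Type*} [NormedAddCommGroup E] [NormedSpace ℝ E] {g : ℝ → E}
    (hg : IntervalIntegrable g volume 0 1) :
    ∑ i ∈ Finset.range N, ∫ t in m.x i..m.x (i + 1), g t = ∫ t in (0 : ℝ)..1, g t := by
  rw [intervalIntegral.sum_integral_adjacent_intervals (a := m.x)
    fun i hi => hg.mono_set (m.uIcc_subset hi), m.x_zero, m.x_last]

/-- The `L²` norm of `g` on the `i`-th element. -/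
def elementNorm (g : ℝ → ℝ) (i : ℕ) : ℝ := lpNorm g 2 vol[m.x i,m.x (i + 1)]

lemma sq_elementNorm {g : ℝ → ℝ} (hg : AEStronglyMeasurable g vol[0,1]) (hi : i < N) :
    m.elementNorm g i ^ 2 = ∫ t in m.x i..m.x (i + 1), g t ^ 2 := by
  rw [elementNorm, sq_lpNorm_two (hg.mono_measure (m.restrict_le hi)),
    intervalIntegral.integral_of_le (m.x_mono i hi).le]

lemma sum_sq_elementNorm {g : ℝ → ℝ} (hg : MemLp g 2 vol[0,1]) :
    ∑ i ∈ Finset.range N, m.elementNorm g i ^ 2 = lpNorm g 2 vol[0,1] ^ 2 := by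
  rw [sq_lpNorm_two hg.1, ← intervalIntegral.integral_of_le zero_le_one, ← m.sum_integral
    ((intervalIntegrable_iff_integrableOn_Ioc_of_le zero_le_one).mpr hg.integrable_sq)]
  exact Finset.sum_congr rfl fun i hi => m.sq_elementNorm hg.1 (Finset.mem_range.mp hi)

/-- The residual error estimator `(∑ᵢ hᵢ² ‖g‖²_{Kᵢ})^{1/2}`, for a residual `g`. -/
def estimator (g : ℝ → ℝ) : ℝ :=
  √(∑ i ∈ Finset.range N, (m.h i * m.elementNorm g i) ^ 2)

end Geometry

section Interpolation

variable (v : H1)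

/-- The slope on the `i`-th element of the piecewise linear interpolant of `v`. -/
def slope (i : ℕ) : ℝ := (v.val (m.x (i + 1)) - v.val (m.x i)) / m.h i

/-- The derivative of the piecewise linear interpolant of `v`, zero at the mesh points. -/
def interpolantDeriv (t : ℝ) : ℝ :=
  ∑ i ∈ Finset.range N, (Ioo (m.x i) (m.x (i + 1))).indicator (fun _ => m.slope v i) t

lemma interpolantDeriv_eq {t : ℝ} (hi : i < N) (ht : t ∈ Ioo (m.x i) (m.x (i + 1))) :
    m.interpolantDeriv v t = m.slope v i := by
  rw [interpolantDeriv, Finset.sum_eq_single_of_mem i (Finset.mem_range.mpr hi),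
    indicator_of_mem ht]
  refine fun j hj hji => indicator_of_notMem (fun htj => ?_) _
  rcases hji.lt_or_gt with hlt | hgt
  · exact (ht.1.trans htj.2).not_ge (m.x_le_x hlt hi.le)
  · exact (htj.1.trans ht.2).not_ge (m.x_le_x hgt (Finset.mem_range.mp hj).le)

lemma memL2_interpolantDeriv : MemL2 (m.interpolantDeriv v) := by
  refine ⟨Finset.measurable_fun_sum _ fun i _ => measurable_const.indicator measurableSet_Ioo, ?_⟩
  have : MemLp (m.interpolantDeriv v) 2 vol[0,1] :=
    memLp_finsetSum _ fun i _ => (memLp_const (m.slope v i)).indicator measurableSet_Ioo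
  exact (intervalIntegrable_iff_integrableOn_Ioc_of_le zero_le_one).mpr this.integrable_sq

/-- The continuous piecewise linear function that agrees with `v` at the mesh points. -/
def interpolant : H1 := .ofDeriv (v.val 0) (m.interpolantDeriv v) (m.memL2_interpolantDeriv v)

lemma interpolant_isPL : m.IsPL (m.interpolant v) :=
  fun i hi => ⟨m.slope v i, fun _ ht => m.interpolantDeriv_eq v hi ht⟩

lemma interpolant_val (hj : j ≤ N) : (m.interpolant v).val (m.x j) = v.val (m.x j) := by
  induction j with
  | zero => simp [m.x_zero, interpolant, H1.ofDeriv]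
  | succ i ih =>
    have increment : ∫ t in m.x i..m.x (i + 1), (m.interpolant v).dval t =
        v.val (m.x (i + 1)) - v.val (m.x i) := by
      have slope_ae : (m.interpolant v).dval =ᵐ[vol[m.x i,m.x (i + 1)]] fun _ => m.slope v i :=
        ae_mem_Ioo.mono fun t ht => m.interpolantDeriv_eq v hj ht
      rw [intervalIntegral.integral_of_le (m.x_mono i hj).le, integral_congr_ae slope_ae,
        ← intervalIntegral.integral_of_le (m.x_mono i hj).le, intervalIntegral.integral_const,
        smul_eq_mul]
      exact mul_div_cancel₀ _ (m.h_pos hj).ne'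
    rwa [((m.interpolant v).isPrimitive.mono (m.uIcc_subset hj)).integral_eq_sub,
      ih (Nat.le_of_succ_le hj), sub_left_inj] at increment

variable {v}

lemma interpolant_isH10 (hv : v.IsH10) : (m.interpolant v).IsH10 where
  val_zero := by simpa only [m.x_zero, hv.val_zero] using m.interpolant_val v N.zero_le
  val_one := by simpa only [m.x_last, hv.val_one] using m.interpolant_val v le_rfl

lemma elementNorm_sub_interpolant_le (v : H1) (hi : i < N) :
    m.elementNorm (v - m.interpolant v).val i ≤ m.h i * m.elementNorm v.dval i := by
  set w : H1 := v - m.interpolant v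
  have primitive := w.isPrimitive.mono (m.uIcc_subset hi)
  have memLp_w := w.memLp_dval.mono_measure (m.restrict_le hi)
  have w_left : w.val (m.x i) = 0 := sub_eq_zero.mpr (m.interpolant_val v hi.le).symm
  have w_right : w.val (m.x (i + 1)) = 0 := sub_eq_zero.mpr (m.interpolant_val v hi).symm
  have dval_ae : w.dval =ᵐ[vol[m.x i,m.x (i + 1)]] fun t => v.dval t - m.slope v i :=
    ae_mem_Ioo.mono fun t ht => congrArg (v.dval t - ·) (m.interpolantDeriv_eq v hi ht)
  have mean_zero := primitive.integral_eq_sub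
  rw [w_left, w_right, sub_zero, intervalIntegral.integral_of_le (m.x_mono i hi).le,
    integral_congr_ae dval_ae] at mean_zero
  calc m.elementNorm w.val i ≤ m.h i * m.elementNorm w.dval i :=
        primitive.lpNorm_le_sub_mul_lpNorm (m.x_mono i hi).le w_left one_le_two memLp_w
    _ ≤ m.h i * m.elementNorm v.dval i := by
        refine mul_le_mul_of_nonneg_left ?_ (m.h_pos hi).le
        rw [elementNorm, lpNorm_congr_ae dval_ae]
        exact lpNorm_sub_const_le (v.memLp_dval.mono_measure (m.restrict_le hi)) mean_zero

variable {m}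

lemma IsPL.integral_dval_mul_eq_zero {g g' : ℝ → ℝ} (hv : m.IsPL v)
    (hg : IsPrimitive g g' 0 1) (hg' : MemLp g' 2 vol[0,1]) (hnodes : ∀ j ≤ N, g (m.x j) = 0) :
    ∫ t in (0 : ℝ)..1, v.dval t * g' t = 0 := by
  have hint : IntervalIntegrable (fun t => v.dval t * g' t) volume 0 1 :=
    (intervalIntegrable_iff_integrableOn_Ioc_of_le zero_le_one).mpr
      (v.memLp_dval.integrable_mul hg')
  rw [← m.sum_integral hint]
  refine Finset.sum_eq_zero fun i hi => ?_
  rw [Finset.mem_range] at hi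
  obtain ⟨s, hs⟩ := hv i hi
  calc ∫ t in m.x i..m.x (i + 1), v.dval t * g' t
      = ∫ t in m.x i..m.x (i + 1), s * g' t := by
        simp only [intervalIntegral.integral_of_le (m.x_mono i hi).le]
        exact integral_congr_ae (ae_mem_Ioo.mono fun t ht => congrArg (· * g' t) (hs t ht))
    _ = s * (g (m.x (i + 1)) - g (m.x i)) := by
        rw [intervalIntegral.integral_const_mul, (hg.mono (m.uIcc_subset hi)).integral_eq_sub]
    _ = 0 := by rw [hnodes _ hi, hnodes _ hi.le, sub_zero, mul_zero]

variable (m)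

lemma integral_mul_le_sum {g k : ℝ → ℝ} (hg : MemLp g 2 vol[0,1]) (hk : MemLp k 2 vol[0,1]) :
    ∫ t in (0 : ℝ)..1, g t * k t ≤
      ∑ i ∈ Finset.range N, m.elementNorm g i * m.elementNorm k i := by
  have hgk : IntervalIntegrable (fun t => g t * k t) volume 0 1 :=
    (intervalIntegrable_iff_integrableOn_Ioc_of_le zero_le_one).mpr (hg.integrable_mul hk)
  rw [← m.sum_integral hgk]
  refine Finset.sum_le_sum fun i hi => ?_
  rw [Finset.mem_range] at hi
  rw [intervalIntegral.integral_of_le (m.x_mono i hi).le]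
  exact le_of_abs_le (norm_integral_mul_le_lpNorm_mul_lpNorm
    (hg.mono_measure (m.restrict_le hi)) (hk.mono_measure (m.restrict_le hi)))

lemma integral_mul_sub_interpolant_le {g : ℝ → ℝ} (hg : MemLp g 2 vol[0,1]) (v : H1) :
    ∫ t in (0 : ℝ)..1, g t * (v - m.interpolant v).val t ≤
      m.estimator g * lpNorm v.dval 2 vol[0,1] :=
  calc ∫ t in (0 : ℝ)..1, g t * (v - m.interpolant v).val t
      ≤ ∑ i ∈ Finset.range N, m.elementNorm g i * m.elementNorm (v - m.interpolant v).val i :=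
        m.integral_mul_le_sum hg (v - m.interpolant v).memLp_val
    _ ≤ ∑ i ∈ Finset.range N, m.h i * m.elementNorm g i * m.elementNorm v.dval i := by
        refine Finset.sum_le_sum fun i hi => ?_
        rw [mul_comm (m.h i), mul_assoc]
        exact mul_le_mul_of_nonneg_left
          (m.elementNorm_sub_interpolant_le v (Finset.mem_range.mp hi)) lpNorm_nonneg
    _ ≤ m.estimator g * √(∑ i ∈ Finset.range N, m.elementNorm v.dval i ^ 2) :=
        Real.sum_mul_le_sqrt_mul_sqrt ..
    _ = m.estimator g * lpNorm v.dval 2 vol[0,1] := by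
        rw [m.sum_sq_elementNorm v.memLp_dval, Real.sqrt_sq lpNorm_nonneg]

variable {m}

lemma IsPL.integral_res_mul {v w : H1} (hv : m.IsPL v) (P : Coeffs) {f : ℝ → ℝ}
    (hf : MemL2 f) (hw : ∀ j ≤ N, w.val (m.x j) = 0) :
    ∫ t in (0 : ℝ)..1, P.res f v t * w.val t = ip f w - P.B v w := by
  have flux : IsPrimitive (fun t => P.a t * w.val t)
      (fun t => P.a' t * w.val t + P.a t * w.dval t) 0 1 := P.isPrimitive_a.mul w.isPrimitive
  rw [P.integral_res_mul hf, hv.integral_dval_mul_eq_zero flux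
    ((w.memLp_val.mul P.memLp_a').add (w.memLp_dval.mul P.memLp_a))
    fun j hj => by rw [hw j hj, mul_zero], add_zero]

end Interpolation

section Equidistribution

variable (g : ℝ → ℝ)

lemma pos (m : Mesh N) : 0 < N := by
  rcases N.eq_zero_or_pos with rfl | hN
  · exact absurd (m.x_zero.symm.trans m.x_last) zero_ne_one
  · exact hN

lemma avg_nonneg : 0 ≤ m.avg g i := Real.sqrt_nonneg _

lemma h_mul_sq_avg {g : ℝ → ℝ} (hg : AEStronglyMeasurable g vol[0,1]) (hi : i < N) :
    m.h i * m.avg g i ^ 2 = m.elementNorm g i ^ 2 := by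
  have hnonneg : 0 ≤ 1 / m.h i * ∫ t in m.x i..m.x (i + 1), g t ^ 2 := mul_nonneg
    (one_div_nonneg.mpr (m.h_pos hi).le)
    (intervalIntegral.integral_nonneg (m.x_mono i hi).le fun t _ => sq_nonneg (g t))
  rw [avg, Real.sq_sqrt hnonneg, m.sq_elementNorm hg hi, ← mul_assoc,
    mul_one_div_cancel (m.h_pos hi).ne', one_mul]

lemma avg_rpow_pow_three : (m.avg g i ^ ((2 : ℝ) / 3)) ^ 3 = m.avg g i ^ 2 := by
  rw [← Real.rpow_mul_natCast (m.avg_nonneg g), ← Real.rpow_natCast]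
  norm_num

/-- The cube root of the intensity parameter `α_h`: the mean over the mesh of `⟨g⟩_i^{2/3}`. -/
def alphaRoot : ℝ := ∑ i ∈ Finset.range N, m.h i * m.avg g i ^ ((2 : ℝ) / 3)

lemma h_mul_avg_rpow_nonneg (hi : i ∈ Finset.range N) :
    0 ≤ m.h i * m.avg g i ^ ((2 : ℝ) / 3) :=
  mul_nonneg (m.h_pos (Finset.mem_range.mp hi)).le (Real.rpow_nonneg (m.avg_nonneg g) _)

lemma alphaRoot_nonneg : 0 ≤ m.alphaRoot g :=
  Finset.sum_nonneg fun _ => m.h_mul_avg_rpow_nonneg g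

lemma alpha_eq_pow : m.alpha g = m.alphaRoot g ^ 3 := rfl

lemma alpha_nonneg : 0 ≤ m.alpha g := pow_nonneg (m.alphaRoot_nonneg g) 3

lemma alpha_le {g : ℝ → ℝ} (hg : MemLp g 2 vol[0,1]) : m.alpha g ≤ lpNorm g 2 vol[0,1] ^ 2 :=
  calc m.alpha g ≤ ∑ i ∈ Finset.range N, m.h i * (m.avg g i ^ ((2 : ℝ) / 3)) ^ 3 :=
        Real.pow_arith_mean_le_arith_mean_pow _ _ _
          (fun i hi => (m.h_pos (Finset.mem_range.mp hi)).le) m.sum_h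
          (fun i _ => Real.rpow_nonneg (m.avg_nonneg g) _) 3
    _ = ∑ i ∈ Finset.range N, m.elementNorm g i ^ 2 :=
        Finset.sum_congr rfl fun i hi => by
          rw [avg_rpow_pow_three, m.h_mul_sq_avg hg.1 (Finset.mem_range.mp hi)]
    _ = lpNorm g 2 vol[0,1] ^ 2 := m.sum_sq_elementNorm hg

lemma one_add_inv_alpha_mul_nonneg : 0 ≤ 1 + (m.alpha g)⁻¹ * m.avg g i ^ 2 :=
  add_nonneg zero_le_one (mul_nonneg (inv_nonneg.mpr (m.alpha_nonneg g)) (sq_nonneg _))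

lemma rho_pow_three : m.rho g i ^ 3 = 1 + (m.alpha g)⁻¹ * m.avg g i ^ 2 := by
  rw [rho, ← Real.rpow_mul_natCast (m.one_add_inv_alpha_mul_nonneg g)]
  norm_num

lemma rho_nonneg : 0 ≤ m.rho g i :=
  Real.rpow_nonneg (m.one_add_inv_alpha_mul_nonneg g) _

lemma rho_le_one_add : m.rho g i ≤ 1 + (m.alphaRoot g)⁻¹ * m.avg g i ^ ((2 : ℝ) / 3) := by
  have hnonneg : 0 ≤ (m.alphaRoot g)⁻¹ * m.avg g i ^ ((2 : ℝ) / 3) :=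
    mul_nonneg (inv_nonneg.mpr (m.alphaRoot_nonneg g)) (Real.rpow_nonneg (m.avg_nonneg g) _)
  refine le_of_pow_le_pow_left₀ three_ne_zero (add_nonneg zero_le_one hnonneg) ?_
  calc m.rho g i ^ 3
      = 1 ^ 3 + ((m.alphaRoot g)⁻¹ * m.avg g i ^ ((2 : ℝ) / 3)) ^ 3 := by
        rw [rho_pow_three, mul_pow, avg_rpow_pow_three, inv_pow, ← alpha_eq_pow, one_pow]
    _ ≤ (1 + (m.alphaRoot g)⁻¹ * m.avg g i ^ ((2 : ℝ) / 3)) ^ 3 :=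
        pow_add_pow_le zero_le_one hnonneg three_ne_zero

lemma sigma_le_two : m.sigma g ≤ 2 :=
  calc m.sigma g
      ≤ ∑ i ∈ Finset.range N, (m.h i + (m.alphaRoot g)⁻¹ *
          (m.h i * m.avg g i ^ ((2 : ℝ) / 3))) := by
        refine Finset.sum_le_sum fun i hi => ?_
        rw [mul_left_comm, ← mul_one_add, mul_comm]
        exact mul_le_mul_of_nonneg_left (m.rho_le_one_add g) (m.h_pos (Finset.mem_range.mp hi)).le
    _ = 1 + (m.alphaRoot g)⁻¹ * m.alphaRoot g := by
        rw [Finset.sum_add_distrib, m.sum_h, ← Finset.mul_sum, alphaRoot]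
    _ ≤ 2 := by linarith [inv_mul_le_one (a := m.alphaRoot g)]

lemma sq_avg_le (hi : i < N) : m.avg g i ^ 2 ≤ m.alpha g * m.rho g i ^ 3 := by
  rw [rho_pow_three, mul_one_add, ← mul_assoc]
  rcases (m.alphaRoot_nonneg g).eq_or_lt with hzero | hpos
  · have hi' := Finset.mem_range.mpr hi
    have havg : m.avg g i ^ ((2 : ℝ) / 3) = 0 :=
      (mul_eq_zero.mp ((Finset.sum_eq_zero_iff_of_nonneg fun _ => m.h_mul_avg_rpow_nonneg g).mp
        hzero.symm i hi')).resolve_left (m.h_pos hi).ne'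
    simp [← m.avg_rpow_pow_three g, havg, m.alpha_nonneg g]
  · rw [mul_inv_cancel₀ (m.alpha_eq_pow g ▸ pow_pos hpos 3).ne', one_mul]
    exact le_add_of_nonneg_left (m.alpha_nonneg g)

variable {m g}

lemma IsEquidistributing.sq_h_mul_elementNorm_le (hg : AEStronglyMeasurable g vol[0,1])
    (hm : m.IsEquidistributing g) (hi : i < N) :
    (m.h i * m.elementNorm g i) ^ 2 ≤ m.alpha g * (2 / N) ^ 3 :=
  calc (m.h i * m.elementNorm g i) ^ 2 = m.h i ^ 3 * m.avg g i ^ 2 := by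
        rw [mul_pow, ← m.h_mul_sq_avg hg hi]; ring
    _ ≤ m.h i ^ 3 * (m.alpha g * m.rho g i ^ 3) :=
        mul_le_mul_of_nonneg_left (m.sq_avg_le g hi) (pow_nonneg (m.h_pos hi).le 3)
    _ = m.alpha g * (m.rho g i * m.h i) ^ 3 := by ring
    _ ≤ m.alpha g * (2 / N) ^ 3 := by
        rw [hm i hi]
        refine mul_le_mul_of_nonneg_left (pow_le_pow_left₀ ?_ ?_ 3) (m.alpha_nonneg g)
        · exact hm i hi ▸ mul_nonneg (m.rho_nonneg g) (m.h_pos hi).le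
        · exact div_le_div_of_nonneg_right (m.sigma_le_two g) N.cast_nonneg

lemma IsEquidistributing.estimator_le (hg : MemLp g 2 vol[0,1]) (hm : m.IsEquidistributing g) :
    m.estimator g ≤ √8 * lpNorm g 2 vol[0,1] / N := by
  have hN : (N : ℝ) ≠ 0 := Nat.cast_ne_zero.mpr m.pos.ne'
  refine Real.sqrt_le_iff.mpr ⟨div_nonneg
    (mul_nonneg (Real.sqrt_nonneg 8) lpNorm_nonneg) N.cast_nonneg, ?_⟩
  calc ∑ i ∈ Finset.range N, (m.h i * m.elementNorm g i) ^ 2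
      ≤ ∑ i ∈ Finset.range N, m.alpha g * (2 / N) ^ 3 :=
        Finset.sum_le_sum fun i hi => hm.sq_h_mul_elementNorm_le hg.1 (Finset.mem_range.mp hi)
    _ = 8 * m.alpha g / N ^ 2 := by
        rw [Finset.sum_const, Finset.card_range, nsmul_eq_mul]
        field_simp
        norm_num
    _ ≤ 8 * lpNorm g 2 vol[0,1] ^ 2 / N ^ 2 := by gcongr; exact m.alpha_le hg
    _ = (√8 * lpNorm g 2 vol[0,1] / N) ^ 2 := by
        rw [div_pow, mul_pow, Real.sq_sqrt (by norm_num)]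

end Equidistribution

end Mesh

namespace Coeffs.IsFESolution

variable {P : Coeffs} {f : ℝ → ℝ} {u uh : H1} {N : ℕ} {m : Mesh N}

lemma isH10 (huh : P.IsFESolution f m uh) : uh.IsH10 := ⟨huh.1, huh.2.1⟩

lemma isPL (huh : P.IsFESolution f m uh) : m.IsPL uh := huh.2.2.1

lemma galerkin_orthogonality (hu : P.IsWeakSolution f u) (huh : P.IsFESolution f m uh) {v : H1}
    (hv : v.IsH10) (hPL : m.IsPL v) : P.B (u - uh) v = 0 := by
  rw [B_sub_left, hu.2.2 v hv.1 hv.2, huh.2.2.2 v hv.1 hv.2 hPL, sub_self]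

lemma a0_mul_error_le (hu : P.IsWeakSolution f u) (huh : P.IsFESolution f m uh) :
    P.a0 * lpNorm (u - uh).dval 2 vol[0,1] ≤ P.continuityConst * lpNorm u.dval 2 vol[0,1] := by
  have he : (u - uh).IsH10 := hu.isH10.sub huh.isH10
  refine P.a0_mul_lpNorm_le he (mul_nonneg P.continuityConst_nonneg lpNorm_nonneg) ?_
  calc P.B (u - uh) (u - uh) = P.B (u - uh) u := by
        rw [B_sub_right, huh.galerkin_orthogonality hu huh.isH10 huh.isPL, sub_zero]
    _ ≤ P.continuityConst * lpNorm (u - uh).dval 2 vol[0,1] * lpNorm u.dval 2 vol[0,1] :=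
        P.B_le he.1 hu.1
    _ = P.continuityConst * lpNorm u.dval 2 vol[0,1] * lpNorm (u - uh).dval 2 vol[0,1] :=
        mul_right_comm ..

lemma B_error_error_eq (hf : MemL2 f) (hu : P.IsWeakSolution f u) (huh : P.IsFESolution f m uh) :
    P.B (u - uh) (u - uh) =
      ∫ t in (0 : ℝ)..1, P.res f uh t * ((u - uh) - m.interpolant (u - uh)).val t := by
  set e : H1 := u - uh
  have he : e.IsH10 := hu.isH10.sub huh.isH10
  have hI : (m.interpolant e).IsH10 := m.interpolant_isH10 he
  have hw : (e - m.interpolant e).IsH10 := he.sub hI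
  calc P.B e e = P.B e (e - m.interpolant e) := by
        rw [B_sub_right P e e, huh.galerkin_orthogonality hu hI (m.interpolant_isPL e), sub_zero]
    _ = ip f (e - m.interpolant e) - P.B uh (e - m.interpolant e) := by
        rw [B_sub_left, hu.2.2 _ hw.1 hw.2]
    _ = ∫ t in (0 : ℝ)..1, P.res f uh t * (e - m.interpolant e).val t :=
        (huh.isPL.integral_res_mul P hf fun j hj =>
          sub_eq_zero.mpr (m.interpolant_val e hj).symm).symm

lemma a0_mul_error_le_estimator (hf : MemL2 f) (hu : P.IsWeakSolution f u)
    (huh : P.IsFESolution f m uh) :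
    P.a0 * lpNorm (u - uh).dval 2 vol[0,1] ≤ m.estimator (P.res f uh) := by
  refine P.a0_mul_lpNorm_le (hu.isH10.sub huh.isH10) (Real.sqrt_nonneg _) ?_
  rw [huh.B_error_error_eq hf hu]
  exact m.integral_mul_sub_interpolant_le (P.memLp_res hf uh) (u - uh)

end Coeffs.IsFESolution

namespace Coeffs

variable (P : Coeffs) {f : ℝ → ℝ} {u uh : H1} {N : ℕ} {m : Mesh N}

/-- A bound, uniform over all meshes, for the ratio `‖r_h‖ / ‖r‖` of the residuals of the finite
element solution and of the weak solution. -/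
def residualRatio : ℝ := 1 + P.residualConst * P.continuityConst / P.a0 ^ 2

lemma residualRatio_pos : 0 < P.residualRatio :=
  add_pos_of_pos_of_nonneg one_pos <|
    div_nonneg (mul_nonneg P.residualConst_nonneg P.continuityConst_nonneg) (sq_nonneg _)

variable {P}

lemma IsFESolution.lpNorm_res_le (hf : MemL2 f) (hu : P.IsWeakSolution f u)
    (huh : P.IsFESolution f m uh) :
    lpNorm (P.res f uh) 2 vol[0,1] ≤ P.residualRatio * lpNorm (P.res f u) 2 vol[0,1] := by
  have ha := P.a0_pos
  have error_le : lpNorm (u - uh).dval 2 vol[0,1] ≤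
      P.continuityConst / P.a0 ^ 2 * lpNorm (P.res f u) 2 vol[0,1] := by
    rw [div_mul_eq_mul_div, le_div_iff₀' (pow_pos ha 2), sq, mul_assoc]
    calc P.a0 * (P.a0 * lpNorm (u - uh).dval 2 vol[0,1])
        ≤ P.a0 * (P.continuityConst * lpNorm u.dval 2 vol[0,1]) :=
          mul_le_mul_of_nonneg_left (huh.a0_mul_error_le hu) ha.le
      _ = P.continuityConst * (P.a0 * lpNorm u.dval 2 vol[0,1]) := mul_left_comm ..
      _ ≤ P.continuityConst * lpNorm (P.res f u) 2 vol[0,1] :=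
          mul_le_mul_of_nonneg_left (hu.a0_mul_lpNorm_dval_le hf) P.continuityConst_nonneg
  calc lpNorm (P.res f uh) 2 vol[0,1]
      ≤ lpNorm (P.res f u) 2 vol[0,1] + P.residualConst * lpNorm (u - uh).dval 2 vol[0,1] :=
        P.lpNorm_res_le hf (hu.isH10.sub huh.isH10).1
    _ ≤ lpNorm (P.res f u) 2 vol[0,1] + P.residualConst *
          (P.continuityConst / P.a0 ^ 2 * lpNorm (P.res f u) 2 vol[0,1]) := by
        gcongr
        exact P.residualConst_nonneg
    _ = P.residualRatio * lpNorm (P.res f u) 2 vol[0,1] := by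
        rw [residualRatio]; ring

end Coeffs

theorem statement6_general (P : Coeffs) :
    ∃ C : ℝ, 0 < C ∧
      ∀ f : ℝ → ℝ, MemL2 f →
      ∀ u : H1, P.IsWeakSolution f u →
      ∀ (N : ℕ) (m : Mesh N) (uh : H1), P.IsFESolution f m uh →
        m.IsEquidistributing (P.res f uh) →
        L2 (fun t => u.dval t - uh.dval t) ≤ C * L2 (P.res f u) / (N : ℝ) := by
  have ha := P.a0_pos
  have hκ := P.residualRatio_pos
  refine ⟨P.a0⁻¹ * √8 * P.residualRatio, by positivity, fun f hf u hu N m uh huh hm => ?_⟩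
  calc L2 (fun t => u.dval t - uh.dval t)
      = lpNorm (u - uh).dval 2 vol[0,1] := L2_eq_lpNorm (u - uh).memLp_dval.1
    _ ≤ P.a0⁻¹ * m.estimator (P.res f uh) :=
        (le_inv_mul_iff₀ ha).mpr (huh.a0_mul_error_le_estimator hf hu)
    _ ≤ P.a0⁻¹ * (√8 * lpNorm (P.res f uh) 2 vol[0,1] / N) := by
        gcongr
        exact hm.estimator_le (P.memLp_res hf uh)
    _ ≤ P.a0⁻¹ * (√8 * (P.residualRatio * lpNorm (P.res f u) 2 vol[0,1]) / N) := by
        gcongr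
        exact huh.lpNorm_res_le hf hu
    _ = P.a0⁻¹ * √8 * P.residualRatio * L2 (P.res f u) / N := by
        rw [L2_eq_lpNorm (P.memLp_res hf u).1]
        ring

/-- a priori error bound on equidistributing meshes (Theorem 3.1). -/
theorem statement6 (P : Coeffs) :
    ∃ C : ℝ, 0 < C ∧
      ∀ f : ℝ → ℝ, MemL2 f →
      ∀ u : H1, P.IsWeakSolution f u → u.IsH2 →
      ∀ (N : ℕ) (m : Mesh N) (uh : H1), P.IsFESolution f m uh →
        m.IsEquidistributing (P.res f uh) →
        L2 (fun t => u.dval t - uh.dval t) ≤ C * L2 (P.res f u) / (N:ℝ) := by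
  obtain ⟨C, hC, h⟩ := statement6_general P
  exact ⟨C, hC, fun f hf u hu _ => h f hf u hu⟩

end EquidMesh
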